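/- arXiv:2310.16674 — 5 statements merged into one kernel-verified Lean document; each statement's English description precedes it below -/
import Mathlib

section
/- Let m, n ∈ ℕ and α ∈ ℝ. For every x ∈ ℝ, lim_{β→∞} β^{n+m} P̂^{(I,m)}_n(1 − 2x/β; α, β) = (−2)^{n+m} L̂^{(I,m)}_n(x; α), the limit being taken along real β → +∞ (for all sufficiently large β all occurring polynomials are defined). -/
open Finset Filter Topology

/-- Monic Laguerre polynomial `L_n^{(α)}(x)`. -/
noncomputable def lagP (n : ℕ) (α x : ℝ) : ℝ :=
  ∑ k ∈ Finset.range (n + 1),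
    (-1 : ℝ) ^ (n - k) * ((n.factorial : ℝ) / (k.factorial : ℝ)) *
      ((∏ j ∈ Finset.Icc (k + 1) n, (α + (j : ℝ))) / ((n - k).factorial : ℝ)) * x ^ k

/-- Pochhammer symbol `(a)_n = a (a+1) ⋯ (a+n−1)`. -/
noncomputable def poch (a : ℝ) (n : ℕ) : ℝ := ∏ j ∈ Finset.range n, (a + (j : ℝ))

/-- Monic Jacobi polynomial `P_n^{(α,β)}(x)`. -/
noncomputable def jacP (n : ℕ) (α β x : ℝ) : ℝ :=
  (2 ^ n * (n.factorial : ℝ) / poch ((n : ℝ) + α + β + 1) n) *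
    ∑ s ∈ Finset.range (n + 1),
      ((∏ j ∈ Finset.Icc (s + 1) n, (α + (j : ℝ))) / ((n - s).factorial : ℝ)) *
        ((∏ j ∈ Finset.Icc (n - s + 1) n, (β + (j : ℝ))) / (s.factorial : ℝ)) *
        ((x - 1) / 2) ^ s * ((x + 1) / 2) ^ (n - s)

/-- Monic Hermite polynomial, as a polynomial function on `ℂ`. -/
noncomputable def hermC (n : ℕ) (z : ℂ) : ℂ :=
  ∑ k ∈ Finset.range (n / 2 + 1),
    (-1 : ℂ) ^ k *
      ((n.factorial : ℂ) / ((k.factorial : ℂ) * ((n - 2 * k).factorial : ℂ) * 4 ^ k)) *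
      z ^ (n - 2 * k)

/-- Type I `X_m`-Laguerre exceptional orthogonal polynomial `L̂^{(I,m)}_n(x;α)`. -/
noncomputable def lagI (m n : ℕ) (α x : ℝ) : ℝ :=
  (-1 : ℝ) ^ m * (lagP m (α + 1) (-x) * lagP n α x
    - (n : ℝ) * lagP m α (-x) * lagP (n - 1) (α + 1) x)

/-- Type II `X_m`-Laguerre exceptional orthogonal polynomial `L̂^{(II,m)}_n(x;α)`. -/
noncomputable def lagII (m n : ℕ) (α x : ℝ) : ℝ :=
  (1 / (α + (n : ℝ) - (m : ℝ))) *
    ((n : ℝ) * x * lagP m (-α) x * lagP (n - 1) (α + 1) x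
      - ((m : ℝ) - α) * lagP m (-α - 1) x * lagP n α x)

/-- Type III `X_m`-Laguerre exceptional orthogonal polynomial `L̂^{(III,m)}_n(x;α)`. -/
noncomputable def lagIII (m n : ℕ) (α x : ℝ) : ℝ :=
  if n = 0 then 1 else
    (-1 : ℝ) ^ m * (lagP m (-α) (-x) * lagP (n - m) (α - 1) x
      - (m : ℝ) * x * lagP (m - 1) (-α + 1) (-x) * lagP (n - m - 1) α x)

/-- Type I `X_m`-Jacobi exceptional orthogonal polynomial `P̂^{(I,m)}_n(x;α,β)`. -/
noncomputable def jacI (m n : ℕ) (α β x : ℝ) : ℝ :=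
  (1 / (β + (n : ℝ) - (m : ℝ))) *
    (jacP m α (-β) x * ((n : ℝ) * (1 + x) * jacP (n - 1) (α + 1) (β + 1) x
        + β * jacP n α β x)
      - (m : ℝ) * (1 + x) * jacP (m - 1) (α + 1) (-β + 1) x * jacP n α β x)

/-- Type II `X_m`-Jacobi exceptional orthogonal polynomial `P̂^{(II,m)}_n(x;α,β)`. -/
noncomputable def jacII (m n : ℕ) (α β x : ℝ) : ℝ :=
  (1 / ((m : ℝ) - (n : ℝ) - α)) *
    (jacP m (-α) β x * ((n : ℝ) * (1 - x) * jacP (n - 1) (α + 1) (β + 1) x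
        - α * jacP n α β x)
      - (m : ℝ) * (1 - x) * jacP (m - 1) (-α + 1) (β + 1) x * jacP n α β x)

/-- Type III `X_m`-Jacobi exceptional orthogonal polynomial `P̂^{(III,m)}_n(x;α,β)`. -/
noncomputable def jacIII (m n : ℕ) (α β x : ℝ) : ℝ :=
  if n = 0 then 1 else
    (1 / (α + β + (n : ℝ) - 2 * (m : ℝ) - 1)) *
      ((α + β + (n : ℝ) - (m : ℝ) - 1) * jacP m (-α) (-β) x * jacP (n - m) (α - 1) (β - 1) x
        + (m : ℝ) * (1 - x ^ 2) * jacP (m - 1) (-α + 1) (-β + 1) x * jacP (n - m - 1) α β x)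

/-- Type III `X_m`-Hermite exceptional orthogonal polynomial `Ĥ^{(III,m)}_n(x)`
(a real polynomial, expressed via complex Hermite values). -/
noncomputable def hermIII (m n : ℕ) (x : ℝ) : ℂ :=
  if n = 0 then 1 else
    Complex.I ^ m * (hermC m (Complex.I * x) * hermC (n - m) (x : ℂ)
      + Complex.I * ((m : ℂ) / 2) * hermC (m - 1) (Complex.I * x) * hermC (n - m - 1) (x : ℂ))

/-!
Rescaling `x ↦ 1 - 2x/β` sends Jacobi polynomials to Laguerre polynomials: in the explicit sum for
`P_n^{(α,b)}`, the only quantities that grow are the normalising Pochhammer symbol and the binomial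
coefficients `C(b+n, s)`, and if `b/t → ε ≠ 0` they behave like `(εt)^n` and `(εt)^s/s!`. Taking
`ε = ±1`, every factor of `P̂^{(I,m)}_n` thus converges separately. The limit contains
`L_m^{(α)}(-x) - m L_{m-1}^{(α+1)}(-x)`, which Pascal's rule contracts to the factor
`L_m^{(α+1)}(-x)` of `L̂^{(I,m)}_n`.
-/

section RingChoose

variable {K : Type*} [Field K] [CharZero K]

lemma ringChoose_eq_prod_range_div (r : K) (k : ℕ) :
    Ring.choose r k = (∏ j ∈ range k, (r - j)) / (k.factorial : K) := by
  rw [Ring.choose_eq_smul, ← Polynomial.aeval_eq_smeval, ← Polynomial.eval_map_algebraMap,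
    descPochhammer_map, descPochhammer_eval_eq_prod_range, smul_eq_mul, inv_mul_eq_div]

lemma prod_Icc_div_factorial_eq_ringChoose {k n : ℕ} (hkn : k ≤ n) (r : K) :
    (∏ j ∈ Icc (k + 1) n, (r + j)) / ((n - k).factorial : K) = Ring.choose (r + n) (n - k) := by
  rw [ringChoose_eq_prod_range_div, ← Ico_add_one_right_eq_Icc, prod_Ico_eq_prod_range,
    ← prod_range_reflect, Nat.add_sub_add_right]
  congr 1
  refine prod_congr rfl fun j hj => ?_
  have hindex : k + 1 + (n - k - 1 - j) + j = n := by
    have := mem_range.mp hj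
    omega
  have hcast : ((k + 1 + (n - k - 1 - j) : ℕ) : K) + j = n := by exact_mod_cast hindex
  linear_combination hcast

end RingChoose

section ExplicitSums

lemma lagP_eq_sum_ringChoose (n : ℕ) (α x : ℝ) :
    lagP n α x = ∑ k ∈ range (n + 1),
      (-1) ^ (n - k) * (n.factorial / k.factorial) * Ring.choose (α + n) (n - k) * x ^ k := by
  refine sum_congr rfl fun k hk => ?_
  rw [prod_Icc_div_factorial_eq_ringChoose (mem_range_succ_iff.mp hk)]

lemma jacP_eq_sum_ringChoose (n : ℕ) (α β x : ℝ) :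
    jacP n α β x = 2 ^ n * n.factorial / poch (n + α + β + 1) n *
      ∑ s ∈ range (n + 1), Ring.choose (α + n) (n - s) * Ring.choose (β + n) s *
        ((x - 1) / 2) ^ s * ((x + 1) / 2) ^ (n - s) := by
  unfold jacP
  congr 1
  refine sum_congr rfl fun s hs => ?_
  have hsn : s ≤ n := mem_range_succ_iff.mp hs
  have hβ := prod_Icc_div_factorial_eq_ringChoose (Nat.sub_le n s) β
  rw [Nat.sub_sub_self hsn] at hβ
  rw [prod_Icc_div_factorial_eq_ringChoose hsn, hβ]

lemma lagP_succ_add_one (n : ℕ) (α x : ℝ) :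
    lagP (n + 1) (α + 1) x = lagP (n + 1) α x - (n + 1) * lagP n (α + 1) x := by
  have pascal (d : ℕ) : Ring.choose (α + 1 + (n + 1 : ℕ)) (d + 1) =
      Ring.choose (α + 1 + n) d + Ring.choose (α + (n + 1 : ℕ)) (d + 1) := by
    rw [show α + 1 + ((n + 1 : ℕ) : ℝ) = α + 1 + n + 1 by push_cast; ring,
      Ring.choose_succ_succ, show α + 1 + (n : ℝ) = α + (n + 1 : ℕ) by push_cast; ring]
  simp only [lagP_eq_sum_ringChoose]
  rw [sum_range_succ _ (n + 1), sum_range_succ _ (n + 1), mul_sum, add_sub_right_comm,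
    ← sum_sub_distrib]
  simp only [Nat.sub_self, Ring.choose_zero_right]
  congr 1
  refine sum_congr rfl fun k hk => ?_
  rw [Nat.succ_sub (mem_range_succ_iff.mp hk), Nat.succ_eq_add_one, pascal, Nat.factorial_succ]
  push_cast
  ring

lemma lagP_add_one (m : ℕ) (α x : ℝ) :
    lagP m (α + 1) x = lagP m α x - m * lagP (m - 1) (α + 1) x := by
  cases m with
  | zero => simp [lagP]
  | succ n => exact_mod_cast lagP_succ_add_one n α x

end ExplicitSums

section Asymptotics

variable {ι 𝕜 : Type*} [NormedField 𝕜] {l : Filter ι} {b t : ι → 𝕜} {ε : 𝕜}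

lemma tendsto_add_const_div (ht : Tendsto t l (Bornology.cobounded 𝕜))
    (hb : Tendsto (fun i => b i / t i) l (𝓝 ε)) (c : 𝕜) :
    Tendsto (fun i => (b i + c) / t i) l (𝓝 ε) := by
  simpa [add_mul, div_eq_mul_inv] using
    hb.add ((tendsto_inv₀_cobounded.comp ht).const_mul c)

lemma tendsto_prod_range_add_div_pow (ht : Tendsto t l (Bornology.cobounded 𝕜))
    (hb : Tendsto (fun i => b i / t i) l (𝓝 ε)) (c : ℕ → 𝕜) (n : ℕ) :
    Tendsto (fun i => (∏ j ∈ range n, (b i + c j)) / t i ^ n) l (𝓝 (ε ^ n)) := by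
  simpa [prod_div_distrib] using
    tendsto_finsetProd (range n) fun j _ => tendsto_add_const_div ht hb (c j)

lemma tendsto_ringChoose_add_div_pow [CharZero 𝕜] (ht : Tendsto t l (Bornology.cobounded 𝕜))
    (hb : Tendsto (fun i => b i / t i) l (𝓝 ε)) (c : 𝕜) (k : ℕ) :
    Tendsto (fun i => Ring.choose (b i + c) k / t i ^ k) l (𝓝 (ε ^ k / k.factorial)) := by
  refine ((tendsto_prod_range_add_div_pow ht hb (fun j => c - j) k).div_const _).congr fun i => ?_
  simp only [ringChoose_eq_prod_range_div, add_sub_assoc, div_right_comm]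

end Asymptotics

section JacobiToLaguerre

lemma pow_mul_jacP_one_sub_div (n : ℕ) (α b x t : ℝ) :
    t ^ n * jacP n α b (1 - 2 * x / t) =
      2 ^ n * n.factorial / (poch (n + α + b + 1) n / t ^ n) *
        ∑ s ∈ range (n + 1), Ring.choose (α + n) (n - s) * (Ring.choose (b + n) s / t ^ s) *
          (-x) ^ s * (1 - x / t) ^ (n - s) := by
  have hsub : (1 - 2 * x / t - 1) / 2 = -x / t := by ring
  have hadd : (1 - 2 * x / t + 1) / 2 = 1 - x / t := by ring
  have hsum : ∑ s ∈ range (n + 1), Ring.choose (α + n) (n - s) * Ring.choose (b + n) s *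
        (-x / t) ^ s * (1 - x / t) ^ (n - s) =
      ∑ s ∈ range (n + 1), Ring.choose (α + n) (n - s) * (Ring.choose (b + n) s / t ^ s) *
        (-x) ^ s * (1 - x / t) ^ (n - s) :=
    sum_congr rfl fun s _ => by rw [div_pow]; ring
  rw [jacP_eq_sum_ringChoose, hsub, hadd, hsum, div_div_eq_mul_div]
  ring

lemma neg_two_div_pow_mul_lagP (n : ℕ) (α ε x : ℝ) :
    (-2 / ε) ^ n * lagP n α (ε * x) = 2 ^ n * n.factorial / ε ^ n *
      ∑ s ∈ range (n + 1), Ring.choose (α + n) (n - s) * (ε ^ s / s.factorial) * (-x) ^ s := by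
  rw [lagP_eq_sum_ringChoose, mul_sum, mul_sum]
  refine sum_congr rfl fun s hs => ?_
  have hsign : (-1 : ℝ) ^ n * (-1) ^ (n - s) = (-1) ^ s := by
    obtain ⟨d, rfl⟩ := Nat.exists_eq_add_of_le (mem_range_succ_iff.mp hs)
    rw [Nat.add_sub_cancel_left, pow_add, mul_assoc, ← mul_pow, neg_one_mul, neg_neg, one_pow,
      mul_one]
  rw [div_pow, neg_pow 2, neg_pow x, ← hsign, mul_pow]
  ring

variable {ι : Type*} {l : Filter ι} {b t : ι → ℝ} {ε : ℝ}

theorem tendsto_pow_mul_jacP (ht : Tendsto t l (Bornology.cobounded ℝ))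
    (hb : Tendsto (fun i => b i / t i) l (𝓝 ε)) (hε : ε ≠ 0) (n : ℕ) (α x : ℝ) :
    Tendsto (fun i => t i ^ n * jacP n α (b i) (1 - 2 * x / t i)) l
      (𝓝 ((-2 / ε) ^ n * lagP n α (ε * x))) := by
  have hpoch : Tendsto (fun i => poch (n + α + b i + 1) n / t i ^ n) l (𝓝 (ε ^ n)) := by
    refine (tendsto_prod_range_add_div_pow ht hb (fun j => n + α + 1 + j) n).congr fun i => ?_
    exact congrArg (· / t i ^ n) (prod_congr rfl fun j _ => by ring)
  have hbase : Tendsto (fun i => 1 - x / t i) l (𝓝 1) := by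
    simpa [div_eq_mul_inv] using ((tendsto_inv₀_cobounded.comp ht).const_mul x).const_sub 1
  have hsum : Tendsto (fun i => ∑ s ∈ range (n + 1), Ring.choose (α + n) (n - s) *
        (Ring.choose (b i + n) s / t i ^ s) * (-x) ^ s * (1 - x / t i) ^ (n - s)) l
      (𝓝 (∑ s ∈ range (n + 1),
        Ring.choose (α + n) (n - s) * (ε ^ s / s.factorial) * (-x) ^ s)) := by
    refine tendsto_finsetSum _ fun s _ => ?_
    simpa using (((tendsto_ringChoose_add_div_pow ht hb (n : ℝ) s).const_mul _).mul_const
      ((-x) ^ s)).mul (hbase.pow (n - s))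
  rw [neg_two_div_pow_mul_lagP]
  refine ((tendsto_const_nhds.div hpoch (pow_ne_zero n hε)).mul hsum).congr fun i => ?_
  exact (pow_mul_jacP_one_sub_div n α (b i) x (t i)).symm

end JacobiToLaguerre

section Exceptional

lemma natCast_mul_mul_pow_pred {R : Type*} [CommSemiring R] (n : ℕ) (a : R) :
    n * (a * a ^ (n - 1)) = n * a ^ n := by
  cases n with
  | zero => simp
  | succ n => rw [Nat.add_sub_cancel, pow_succ']

lemma pow_mul_jacI (m n : ℕ) (α β x : ℝ) :
    β ^ (n + m) * jacI m n α β x =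
      β / (β + (n - m)) *
        (β ^ m * jacP m α (-β) x *
            (n * (1 + x) * (β ^ (n - 1) * jacP (n - 1) (α + 1) (β + 1) x) +
              β ^ n * jacP n α β x) -
          m * (1 + x) * (β ^ (m - 1) * jacP (m - 1) (α + 1) (-β + 1) x) *
            (β ^ n * jacP n α β x)) := by
  rw [jacI, pow_add, add_sub_assoc]
  linear_combination
    -(1 / (β + (n - m)) * β ^ m * jacP m α (-β) x * (1 + x) *
        jacP (n - 1) (α + 1) (β + 1) x) * natCast_mul_mul_pow_pred n β +
      1 / (β + (n - m)) * (1 + x) * jacP (m - 1) (α + 1) (-β + 1) x * β ^ n *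
        jacP n α β x * natCast_mul_mul_pow_pred m β

lemma neg_two_pow_mul_lagI (m n : ℕ) (α x : ℝ) :
    (-2) ^ (n + m) * lagI m n α x =
      2 ^ m * lagP m α (-x) *
          (n * 2 * ((-2) ^ (n - 1) * lagP (n - 1) (α + 1) x) + (-2) ^ n * lagP n α x) -
        m * 2 * (2 ^ (m - 1) * lagP (m - 1) (α + 1) (-x)) * ((-2) ^ n * lagP n α x) := by
  have hsign : (-2 : ℝ) ^ m * (-1) ^ m = 2 ^ m := by rw [← mul_pow]; norm_num
  rw [lagI, lagP_add_one m α (-x), pow_add]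
  linear_combination
    (-2) ^ n * ((lagP m α (-x) - m * lagP (m - 1) (α + 1) (-x)) * lagP n α x -
        n * lagP m α (-x) * lagP (n - 1) (α + 1) x) * hsign +
      2 ^ m * lagP m α (-x) * lagP (n - 1) (α + 1) x * natCast_mul_mul_pow_pred n (-2 : ℝ) +
      (-2) ^ n * lagP (m - 1) (α + 1) (-x) * lagP n α x * natCast_mul_mul_pow_pred m (2 : ℝ)

end Exceptional

theorem stmt0_general (m n : ℕ) (α x : ℝ) :
    Tendsto (fun β : ℝ => β ^ (n + m) * jacI m n α β (1 - 2 * x / β)) (Bornology.cobounded ℝ)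
      (𝓝 ((-2) ^ (n + m) * lagI m n α x)) := by
  have hid : Tendsto (fun β : ℝ => β) (Bornology.cobounded ℝ) (Bornology.cobounded ℝ) := tendsto_id
  have hpos : Tendsto (fun β : ℝ => β / β) (Bornology.cobounded ℝ) (𝓝 1) :=
    tendsto_const_nhds.congr' <|
      (Bornology.eventually_ne_cobounded 0).mono fun β hβ => (div_self hβ).symm
  have hneg : Tendsto (fun β : ℝ => -β / β) (Bornology.cobounded ℝ) (𝓝 (-1)) := by
    simpa only [neg_div] using hpos.neg
  have hprefactor : Tendsto (fun β : ℝ => β / (β + (n - m))) (Bornology.cobounded ℝ) (𝓝 1) := by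
    simpa using (tendsto_add_const_div hid hpos (n - m : ℝ)).inv₀ one_ne_zero
  have hpoint : Tendsto (fun β : ℝ => 1 + (1 - 2 * x / β)) (Bornology.cobounded ℝ) (𝓝 2) := by
    simpa [div_eq_mul_inv, one_add_one_eq_two] using
      ((tendsto_inv₀_cobounded.const_mul (2 * x)).const_sub (1 : ℝ)).const_add 1
  have hm := tendsto_pow_mul_jacP hid hneg (by norm_num) m α x
  have hm' := tendsto_pow_mul_jacP hid (tendsto_add_const_div hid hneg 1) (by norm_num)
    (m - 1) (α + 1) x
  have hn := tendsto_pow_mul_jacP hid hpos one_ne_zero n α x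
  have hn' := tendsto_pow_mul_jacP hid (tendsto_add_const_div hid hpos 1) one_ne_zero
    (n - 1) (α + 1) x
  simp only [pow_mul_jacI, neg_two_pow_mul_lagI]
  simpa using hprefactor.mul ((hm.mul (((hpoint.const_mul (n : ℝ)).mul hn').add hn)).sub
    (((hpoint.const_mul (m : ℝ)).mul hm').mul hn))

theorem stmt0 (m n : ℕ) (α x : ℝ) :
    Filter.Tendsto (fun β : ℝ => β ^ (n + m) * jacI m n α β (1 - 2 * x / β)) Filter.atTop
      (nhds ((-2 : ℝ) ^ (n + m) * lagI m n α x)) :=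
  (stmt0_general m n α x).mono_left IsOrderBornology.atTop_le_cobounded
end

section
/- Let m ∈ ℕ with m ≥ 1 and let n = 0 or n ≥ m+1. Then for every x ∈ ℝ, Ĥ^{(III,2m)}_{2n}(x) = L̂^{(III,m)}_n(x²; 1/2); that is, the even type III X_{2m}-Hermite exceptional orthogonal polynomials are obtained from the type III X_m-Laguerre ones with parameter α = 1/2 by the quadratic substitution x ↦ x². -/
open Finset Filter Topology

/-!
For `ε ∈ {0, 1}` the Hermite and Laguerre polynomials are related by
`H_{2n+ε}(z) = z^ε L_n^{(ε-1/2)}(z²)`: comparing coefficients, this is the factorization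
`(2j+ε+1)(2j+ε+2) = 4(j+1)(j+ε+1/2)`, which holds precisely because `ε² = ε`. Taking `z = x` and
`z = ix` turns every Hermite factor of `Ĥ^{(III,2m)}_{2n}` into a Laguerre factor at `±x²`; the two
odd-degree factors contribute `ix · x`, which together with the explicit `i` gives the
factor `-x²` of the second Laguerre term.
-/

section QuadraticTransformation

variable {ε : ℕ}

lemma factorial_two_mul_succ_add (hε : ε ≤ 1) (n : ℕ) :
    ((2 * (n + 1) + ε).factorial : ℝ) =
      4 * (n + 1) * (ε - 1 / 2 + (n + 1)) * (2 * n + ε).factorial := by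
  have hε_sq : (ε : ℝ) ^ 2 = ε := by interval_cases ε <;> norm_num
  rw [show 2 * (n + 1) + ε = 2 * n + ε + 1 + 1 by ring, Nat.factorial_succ, Nat.factorial_succ]
  push_cast
  linear_combination ((2 * n + ε).factorial : ℝ) * hε_sq

lemma prod_Icc_sub_half_add (hε : ε ≤ 1) {k n : ℕ} (hkn : k ≤ n) :
    ∏ j ∈ Icc (k + 1) n, ((ε : ℝ) - 1 / 2 + j) =
      (2 * n + ε).factorial * k.factorial /
        (n.factorial * (2 * k + ε).factorial * 4 ^ (n - k)) := by
  induction n, hkn using Nat.le_induction with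
  | base => simp [field]
  | succ n hkn ih =>
    rw [prod_Icc_succ_top (by lia), ih, factorial_two_mul_succ_add hε, Nat.factorial_succ,
      Nat.succ_sub hkn, pow_succ]
    push_cast
    field_simp

lemma hermite_coeff_eq_laguerre_coeff (hε : ε ≤ 1) {k n : ℕ} (hkn : k ≤ n) :
    ((2 * n + ε).factorial : ℝ) / ((n - k).factorial * (2 * k + ε).factorial * 4 ^ (n - k)) =
      n.factorial / k.factorial *
        ((∏ j ∈ Icc (k + 1) n, ((ε : ℝ) - 1 / 2 + j)) / (n - k).factorial) := by
  rw [prod_Icc_sub_half_add hε hkn]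
  field_simp

lemma hermC_two_mul_add (hε : ε ≤ 1) (n : ℕ) {z : ℂ} {y : ℝ} (hz : z ^ 2 = y) :
    hermC (2 * n + ε) z = z ^ ε * lagP n (ε - 1 / 2) y := by
  unfold hermC lagP
  rw [show (2 * n + ε) / 2 + 1 = n + 1 by lia, ← sum_range_reflect, Complex.ofReal_sum, mul_sum]
  refine sum_congr rfl fun k hk => ?_
  have hkn : k ≤ n := mem_range_succ_iff.mp hk
  have hpow : z ^ (2 * k + ε) = z ^ ε * (y : ℂ) ^ k := by rw [pow_add, pow_mul, hz, mul_comm]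
  rw [show n + 1 - 1 - k = n - k by lia, show 2 * n + ε - 2 * (n - k) = 2 * k + ε by lia, hpow,
    mul_assoc ((-1 : ℝ) ^ (n - k)), ← hermite_coeff_eq_laguerre_coeff hε hkn]
  push_cast
  ring

end QuadraticTransformation

lemma hermC_two_mul (n : ℕ) {z : ℂ} {y : ℝ} (hz : z ^ 2 = y) :
    hermC (2 * n) z = lagP n (-(1 / 2)) y := by
  simpa using hermC_two_mul_add zero_le_one n hz

lemma hermC_two_mul_add_one (n : ℕ) {z : ℂ} {y : ℝ} (hz : z ^ 2 = y) :
    hermC (2 * n + 1) z = z * lagP n (1 / 2) y := by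
  have hα : ((1 : ℕ) : ℝ) - 1 / 2 = 1 / 2 := by norm_num
  simpa only [pow_one, hα] using hermC_two_mul_add le_rfl n hz

lemma hermIII_succ_add_succ (m k : ℕ) (x : ℝ) :
    hermIII (m + 1) (m + 1 + (k + 1)) x =
      Complex.I ^ (m + 1) * (hermC (m + 1) (Complex.I * x) * hermC (k + 1) x +
        Complex.I * ((m + 1) / 2) * hermC m (Complex.I * x) * hermC k x) := by
  simp [hermIII]

lemma lagIII_succ_add_succ (m k : ℕ) (α x : ℝ) :
    lagIII (m + 1) (m + 1 + (k + 1)) α x =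
      (-1) ^ (m + 1) * (lagP (m + 1) (-α) (-x) * lagP (k + 1) (α - 1) x -
        (m + 1) * x * lagP m (-α + 1) (-x) * lagP k α x) := by
  simp [lagIII]

theorem stmt5 (m n : ℕ) (hm : 1 ≤ m) (hn : n = 0 ∨ m + 1 ≤ n) (x : ℝ) :
    hermIII (2 * m) (2 * n) x = ((lagIII m n (1 / 2) (x ^ 2) : ℝ) : ℂ) := by
  rcases hn with rfl | hmn
  · simp [hermIII, lagIII]
  obtain ⟨p, rfl⟩ := Nat.exists_eq_add_of_le' hm
  obtain ⟨q, rfl⟩ : ∃ q, n = p + 1 + (q + 1) := Nat.exists_eq_add_of_lt hmn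
  have hx : (x : ℂ) ^ 2 = (x ^ 2 : ℝ) := by push_cast; rfl
  have hIx : (Complex.I * x) ^ 2 = (-x ^ 2 : ℝ) := by simp [mul_pow]
  rw [show 2 * (p + 1 + (q + 1)) = 2 * p + 1 + 1 + (2 * q + 1 + 1) by ring,
    show 2 * (p + 1) = 2 * p + 1 + 1 by ring, hermIII_succ_add_succ, lagIII_succ_add_succ,
    hermC_two_mul_add_one p hIx, hermC_two_mul_add_one q hx,
    show 2 * p + 1 + 1 = 2 * (p + 1) by ring, show 2 * q + 1 + 1 = 2 * (q + 1) by ring,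
    hermC_two_mul _ hIx, hermC_two_mul _ hx, pow_mul, Complex.I_sq,
    show (1 / 2 - 1 : ℝ) = -(1 / 2) by norm_num, show (-(1 / 2) + 1 : ℝ) = 1 / 2 by norm_num]
  push_cast
  linear_combination ((-1) ^ (p + 1) * (p + 1) * x ^ 2 * lagP p (1 / 2) (-x ^ 2) *
    lagP q (1 / 2) (x ^ 2) : ℂ) * Complex.I_sq
end

section
/- For every integer m ≥ 1 and every x ∈ ℝ, Ĥ^{(III,2m)}_{2m+1}(x) = x · L̂^{(III,m−1)}_m(x²; −3/2). -/
open Finset Filter Topology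

/-!
Both sides equal `(-1) ^ m * x * L_m^{(1/2)}(-x ^ 2)`. At the lowest degree `n = m + 1` each
exceptional family collapses to one classical polynomial at a rotated argument: the three-term
recurrence gives `Ĥ^{(III,m)}_{m+1}(x) = -i ^ (m + 1) * H_{m+1}(i * x)`, and the raising relation
`L_{n+1}^{(α-1)} = (X - α) * L_n^{(α)} - X * d/dX L_n^{(α)}` gives
`L̂^{(III,m)}_{m+1}(x; α) = (-1) ^ (m + 1) * L_{m+1}^{(-α-1)}(-x)`. The two are linked by
`H_{2m+1}(z) = z * L_m^{(1/2)}(z ^ 2)`.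
-/

section Laguerre

open Polynomial

variable {R : Type*} [CommRing R]

/-- The coefficient of `X ^ k` in the monic Laguerre polynomial `L_n^{(α)}`. Writing
`n! / (k! (n - k)!)` as a binomial coefficient makes sense over every commutative ring, and makes
the coefficient vanish for `k > n`. -/
def laguerreCoeff (n k : ℕ) (α : R) : R :=
  (-1) ^ (n - k) * n.choose k * ∏ j ∈ Icc (k + 1) n, (α + j)

lemma laguerreCoeff_eq_zero_of_lt {n k : ℕ} (h : n < k) (α : R) : laguerreCoeff n k α = 0 := by
  simp [laguerreCoeff, Nat.choose_eq_zero_of_lt h]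

lemma laguerreCoeff_self (n : ℕ) (α : R) : laguerreCoeff n n α = 1 := by
  simp [laguerreCoeff]

lemma prod_Icc_add_one_add_cast (a b : ℕ) (α : R) :
    ∏ j ∈ Icc (a + 1) (b + 1), (α + j) = ∏ j ∈ Icc a b, (α + 1 + j) := by
  rw [← Finset.map_add_right_Icc, Finset.prod_map]
  refine Finset.prod_congr rfl fun j _ => ?_
  simp only [addRightEmbedding_apply, Nat.cast_add, Nat.cast_one]
  ring

lemma prod_Icc_add_cast_eq_mul {a b : ℕ} (h : a ≤ b) (α : R) :
    ∏ j ∈ Icc a b, (α + j) = (α + a) * ∏ j ∈ Icc (a + 1) b, (α + j) := by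
  rw [← Finset.mul_prod_Ioc_eq_prod_Icc h, Finset.Icc_add_one_left_eq_Ioc]

lemma add_one_mul_laguerreCoeff (n k : ℕ) (α : R) :
    (k + 1) * laguerreCoeff (n + 1) (k + 1) α = (n + 1) * laguerreCoeff n k (α + 1) := by
  have absorption : ((n : R) + 1) * n.choose k = (n + 1).choose (k + 1) * (k + 1) :=
    mod_cast congrArg (Nat.cast (R := R)) (Nat.add_one_mul_choose_eq n k)
  rw [laguerreCoeff, laguerreCoeff, prod_Icc_add_one_add_cast, Nat.add_sub_add_right]
  linear_combination (-(-1) ^ (n - k) * ∏ j ∈ Icc (k + 1) n, (α + 1 + j)) * absorption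

lemma laguerreCoeff_add_one_zero (n : ℕ) (α : R) :
    laguerreCoeff (n + 1) 0 (α - 1) = -α * laguerreCoeff n 0 α := by
  rw [laguerreCoeff, laguerreCoeff, prod_Icc_add_one_add_cast, sub_add_cancel,
    prod_Icc_add_cast_eq_mul n.zero_le]
  simp only [Nat.choose_zero_right, Nat.cast_zero, Nat.cast_one, Nat.sub_zero]
  ring

lemma laguerreCoeff_add_one_add_one (n k : ℕ) (α : R) :
    laguerreCoeff (n + 1) (k + 1) (α - 1) =
      laguerreCoeff n k α - (α + (k + 1)) * laguerreCoeff n (k + 1) α := by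
  rcases lt_trichotomy n k with hlt | rfl | hgt
  · simp [laguerreCoeff_eq_zero_of_lt, hlt, hlt.trans (Nat.lt_succ_self k)]
  · simp [laguerreCoeff_self, laguerreCoeff_eq_zero_of_lt]
  · obtain ⟨d, rfl⟩ := Nat.exists_eq_add_of_lt hgt
    simp only [laguerreCoeff]
    rw [prod_Icc_add_one_add_cast, sub_add_cancel, prod_Icc_add_cast_eq_mul (by omega),
      Nat.choose_succ_succ, show k + d + 1 + 1 - (k + 1) = d + 1 by omega,
      show k + d + 1 - k = d + 1 by omega, show k + d + 1 - (k + 1) = d by omega]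
    push_cast
    ring

/-- The monic Laguerre polynomial `L_n^{(α)}` over a commutative ring; over `ℝ` its values are
those of `lagP`, and over `ℂ` it can be compared with `hermC`. -/
noncomputable def monicLaguerre (n : ℕ) (α : R) : R[X] :=
  ∑ k ∈ range (n + 1), C (laguerreCoeff n k α) * X ^ k

lemma coeff_monicLaguerre (n k : ℕ) (α : R) :
    (monicLaguerre n α).coeff k = laguerreCoeff n k α := by
  simp only [monicLaguerre, finsetSum_coeff, coeff_C_mul_X_pow, Finset.sum_ite_eq, mem_range]
  split_ifs with h
  · rfl
  · exact (laguerreCoeff_eq_zero_of_lt (by omega) α).symm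

lemma eval_monicLaguerre (n : ℕ) (α x : R) :
    (monicLaguerre n α).eval x = ∑ k ∈ range (n + 1), laguerreCoeff n k α * x ^ k := by
  simp [monicLaguerre, eval_finsetSum]

lemma map_monicLaguerre {S : Type*} [CommRing S] (f : R →+* S) (n : ℕ) (α : R) :
    (monicLaguerre n α).map f = monicLaguerre n (f α) := by
  ext k
  simp [coeff_monicLaguerre, laguerreCoeff]

lemma derivative_monicLaguerre_add_one (n : ℕ) (α : R) :
    derivative (monicLaguerre (n + 1) α) = (n + 1 : R[X]) * monicLaguerre n (α + 1) := by
  ext k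
  have cast_eq_C : (n + 1 : R[X]) = C (n + 1 : R) := by simp
  rw [cast_eq_C, coeff_derivative, coeff_C_mul, coeff_monicLaguerre, coeff_monicLaguerre,
    mul_comm, add_one_mul_laguerreCoeff]

lemma monicLaguerre_add_one_sub_one (n : ℕ) (α : R) :
    monicLaguerre (n + 1) (α - 1) =
      (X - C α) * monicLaguerre n α - X * derivative (monicLaguerre n α) := by
  ext k
  cases k with
  | zero => simp [sub_mul, coeff_monicLaguerre, laguerreCoeff_add_one_zero]
  | succ k =>
    simp only [sub_mul, coeff_sub, coeff_X_mul, coeff_C_mul, coeff_derivative,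
      coeff_monicLaguerre, laguerreCoeff_add_one_add_one]
    ring

lemma lagP_eq_eval_monicLaguerre (n : ℕ) (α x : ℝ) :
    lagP n α x = (monicLaguerre n α).eval x := by
  rw [lagP, eval_monicLaguerre]
  refine Finset.sum_congr rfl fun k hk => ?_
  rw [laguerreCoeff, Nat.cast_choose ℝ (mem_range_succ_iff.mp hk)]
  ring

lemma ofReal_lagP (n : ℕ) (α x : ℝ) :
    (lagP n α x : ℂ) = (monicLaguerre n (α : ℂ)).eval (x : ℂ) := by
  rw [lagP_eq_eval_monicLaguerre, ← Complex.ofRealHom_eq_coe, ← Complex.ofRealHom_eq_coe,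
    ← Complex.ofRealHom_eq_coe, ← map_monicLaguerre, eval_map_apply]

lemma lagP_zero (α x : ℝ) : lagP 0 α x = 1 := by
  simp [lagP]

lemma lagP_add_one_sub_one (n : ℕ) (α x : ℝ) :
    lagP (n + 1) (α - 1) x = (x - α) * lagP n α x - n * x * lagP (n - 1) (α + 1) x := by
  simp only [lagP_eq_eval_monicLaguerre, monicLaguerre_add_one_sub_one]
  cases n with
  | zero => simp [monicLaguerre]
  | succ n =>
    simp only [derivative_monicLaguerre_add_one, eval_sub, eval_mul, eval_add, eval_X, eval_C,
      eval_natCast, eval_one, Nat.add_sub_cancel, Nat.cast_add, Nat.cast_one]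
    ring

lemma lagP_one (α x : ℝ) : lagP 1 α x = x - (α + 1) := by
  simpa [lagP_zero] using lagP_add_one_sub_one 0 (α + 1) x

lemma lagIII_add_one (m : ℕ) (α x : ℝ) :
    lagIII m (m + 1) α x = (-1) ^ (m + 1) * lagP (m + 1) (-α - 1) (-x) := by
  rw [lagIII, if_neg m.succ_ne_zero, Nat.add_sub_cancel_left, Nat.sub_self, lagP_zero, lagP_one,
    lagP_add_one_sub_one]
  ring

end Laguerre

section Hermite

open scoped Nat

/-- The coefficient of `z ^ (n - 2 * k)` in the monic Hermite polynomial `H_n`. The binomial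
coefficient replaces `n! / (n - 2 * k)!` so that the coefficient vanishes for `2 * k > n`. -/
noncomputable def hermiteCoeff (n k : ℕ) : ℂ :=
  (-1) ^ k * (n.choose (2 * k) * ((2 * k)! / (k ! * 4 ^ k)))

lemma hermiteCoeff_zero_right (n : ℕ) : hermiteCoeff n 0 = 1 := by
  simp [hermiteCoeff]

lemma hermiteCoeff_eq_zero_of_lt {n k : ℕ} (h : n < 2 * k) : hermiteCoeff n k = 0 := by
  simp [hermiteCoeff, Nat.choose_eq_zero_of_lt h]

lemma hermiteCoeff_add_two_add_one (n k : ℕ) :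
    hermiteCoeff (n + 2) (k + 1) =
      hermiteCoeff (n + 1) (k + 1) - (n + 1) / 2 * hermiteCoeff n k := by
  have pascal : ((n + 2).choose (2 * k + 2) : ℂ) =
      (n + 1).choose (2 * k + 1) + (n + 1).choose (2 * k + 2) :=
    mod_cast Nat.choose_succ_succ (n + 1) (2 * k + 1)
  have absorption : ((n : ℂ) + 1) * n.choose (2 * k) =
      (n + 1).choose (2 * k + 1) * (2 * k + 1) :=
    mod_cast Nat.add_one_mul_choose_eq n (2 * k)
  have ratio : (((2 * k + 2)! : ℂ) / ((k + 1)! * 4 ^ (k + 1))) =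
      (2 * k + 1) / 2 * ((2 * k)! / (k ! * 4 ^ k)) := by
    have : (k : ℂ) + 1 ≠ 0 := Nat.cast_add_one_ne_zero k
    rw [Nat.factorial_succ, Nat.factorial_succ, Nat.factorial_succ]
    push_cast
    field_simp
    ring
  simp only [hermiteCoeff, mul_add, mul_one, pascal, ratio]
  linear_combination (-1 : ℂ) ^ k * ((2 * k)! / (k ! * 4 ^ k)) / 2 * absorption

lemma hermC_eq_sum_hermiteCoeff {n N : ℕ} (h : n < 2 * N) (z : ℂ) :
    hermC n z = ∑ k ∈ range N, hermiteCoeff n k * z ^ (n - 2 * k) := by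
  have range_subset : range (n / 2 + 1) ⊆ range N := Finset.range_subset_range.mpr (by omega)
  rw [hermC, ← Finset.sum_subset range_subset]
  · refine Finset.sum_congr rfl fun k hk => ?_
    have hkn : 2 * k ≤ n := by have := mem_range.mp hk; omega
    have := Nat.cast_ne_zero (R := ℂ).mpr (2 * k).factorial_ne_zero
    rw [hermiteCoeff, Nat.cast_choose ℂ hkn]
    field_simp
  · intro k _ hk
    rw [hermiteCoeff_eq_zero_of_lt (by rw [mem_range] at hk; omega), zero_mul]

lemma hermC_zero (z : ℂ) : hermC 0 z = 1 := by
  simp [hermC]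

lemma hermC_one (z : ℂ) : hermC 1 z = z := by
  simp [hermC]

lemma hermC_add_two (n : ℕ) (z : ℂ) :
    hermC (n + 2) z = z * hermC (n + 1) z - (n + 1) / 2 * hermC n z := by
  have term_recurrence (k : ℕ) :
      hermiteCoeff (n + 2) (k + 1) * z ^ (n + 2 - 2 * (k + 1)) =
        z * (hermiteCoeff (n + 1) (k + 1) * z ^ (n + 1 - 2 * (k + 1))) -
          (n + 1) / 2 * (hermiteCoeff n k * z ^ (n - 2 * k)) := by
    rw [hermiteCoeff_add_two_add_one, show n + 2 - 2 * (k + 1) = n - 2 * k by omega]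
    rcases lt_or_ge (n + 1) (2 * (k + 1)) with hlt | hle
    · rw [hermiteCoeff_eq_zero_of_lt hlt]
      ring
    · rw [show n - 2 * k = n + 1 - 2 * (k + 1) + 1 by omega]
      ring
  rw [hermC_eq_sum_hermiteCoeff (N := n + 2) (by omega),
    hermC_eq_sum_hermiteCoeff (N := n + 2) (by omega),
    hermC_eq_sum_hermiteCoeff (N := n + 1) (by omega), Finset.sum_range_succ',
    Finset.sum_range_succ' _ (n + 1), Finset.sum_congr rfl fun k _ => term_recurrence k,
    Finset.sum_sub_distrib, ← Finset.mul_sum, ← Finset.mul_sum, hermiteCoeff_zero_right,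
    hermiteCoeff_zero_right]
  simp only [mul_zero, Nat.sub_zero]
  ring

lemma hermIII_add_one (m : ℕ) (x : ℝ) :
    hermIII m (m + 1) x = -Complex.I ^ (m + 1) * hermC (m + 1) (Complex.I * x) := by
  rw [hermIII, if_neg m.succ_ne_zero, Nat.add_sub_cancel_left, hermC_one, Nat.sub_self,
    hermC_zero]
  cases m with
  | zero =>
    rw [hermC_zero, hermC_one]
    push_cast
    linear_combination (x : ℂ) * Complex.I_sq
  | succ m =>
    rw [hermC_add_two, Nat.add_sub_cancel]
    push_cast
    linear_combination
      (Complex.I ^ (m + 1) * x * hermC (m + 1) (Complex.I * x)) * Complex.I_sq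

end Hermite

section HermiteLaguerre

open scoped Nat

lemma prod_Icc_half_add_cast {K : Type*} [Field K] [CharZero K] (j k : ℕ) :
    ∏ i ∈ Icc (j + 1) (j + k), (1 / 2 + i : K) =
      (2 * (j + k) + 1)! * j ! / ((2 * j + 1)! * (j + k)! * 4 ^ k) := by
  have factorial_cast_ne_zero (n : ℕ) : (n ! : K) ≠ 0 :=
    Nat.cast_ne_zero.mpr n.factorial_ne_zero
  induction k with
  | zero =>
    have := factorial_cast_ne_zero (2 * j + 1)
    have := factorial_cast_ne_zero j
    simp [field]
  | succ k ih =>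
    have := factorial_cast_ne_zero (2 * j + 1)
    have := factorial_cast_ne_zero (j + k)
    have : ((j + k : ℕ) : K) + 1 ≠ 0 := Nat.cast_add_one_ne_zero (j + k)
    rw [← add_assoc, Finset.prod_Icc_succ_top (by omega), ih,
      show 2 * (j + k + 1) + 1 = 2 * (j + k) + 1 + 1 + 1 by ring, Nat.factorial_succ (j + k),
      Nat.factorial_succ (2 * (j + k) + 1 + 1), Nat.factorial_succ (2 * (j + k) + 1)]
    push_cast at *
    field_simp
    ring

lemma hermC_two_mul_add_one_s6 (m : ℕ) (z : ℂ) :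
    hermC (2 * m + 1) z = z * (monicLaguerre m (1 / 2 : ℂ)).eval (z ^ 2) := by
  rw [hermC, show (2 * m + 1) / 2 = m by omega, eval_monicLaguerre, ← Finset.sum_flip,
    Finset.mul_sum]
  refine Finset.sum_congr rfl fun k hk => ?_
  obtain ⟨d, rfl⟩ := Nat.exists_eq_add_of_le (mem_range_succ_iff.mp hk)
  have := Nat.cast_ne_zero (R := ℂ).mpr k.factorial_ne_zero
  have := Nat.cast_ne_zero (R := ℂ).mpr (k + d).factorial_ne_zero
  rw [laguerreCoeff, Nat.add_sub_cancel_left, prod_Icc_half_add_cast, Nat.cast_add_choose,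
    show 2 * (k + d) + 1 - 2 * d = 2 * k + 1 by omega, pow_succ' z, pow_mul z]
  field_simp

end HermiteLaguerre

theorem stmt6 (m : ℕ) (hm : 1 ≤ m) (x : ℝ) :
    hermIII (2 * m) (2 * m + 1) x = ((x * lagIII (m - 1) m (-3 / 2) (x ^ 2) : ℝ) : ℂ) := by
  obtain ⟨p, rfl⟩ := Nat.exists_eq_add_of_le' hm
  have laguerre_side : lagIII p (p + 1) (-3 / 2) (x ^ 2) =
      (-1) ^ (p + 1) * lagP (p + 1) (1 / 2) (-x ^ 2) := by
    rw [lagIII_add_one, show -(-3 / 2 : ℝ) - 1 = 1 / 2 by norm_num]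
  have hermite_side : hermIII (2 * (p + 1)) (2 * (p + 1) + 1) x =
      (-1) ^ (p + 1) * x * lagP (p + 1) (1 / 2) (-x ^ 2) := by
    rw [hermIII_add_one, hermC_two_mul_add_one_s6, ofReal_lagP, mul_pow, Complex.I_sq, pow_succ,
      pow_mul, Complex.I_sq]
    push_cast
    rw [neg_one_mul]
    linear_combination (-(-1) ^ (p + 1) * x *
      (monicLaguerre (p + 1) (1 / 2 : ℂ)).eval (-(x : ℂ) ^ 2)) * Complex.I_sq
  rw [Nat.add_sub_cancel, laguerre_side, hermite_side]
  push_cast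
  ring
end

section
/- Let m, n ∈ ℕ and α, β ∈ ℝ be such that m − n − α ≠ 0 and all occurring monic Jacobi polynomials are defined. Then for every x ∈ ℝ, P̂^{(II,m)}_n(x; α, β) = (−1)^{n+m} P̂^{(I,m)}_n(−x; β, α); in particular, types I and II X_m-Jacobi exceptional orthogonal polynomials are not independent. -/
open Finset Filter Topology

/-!
The substitution `x ↦ -x` exchanges the two factors `(x - 1) / 2` and `(x + 1) / 2` up to sign, so
reversing the order of summation gives `P_n^{(α,β)}(-x) = (-1)^n P_n^{(β,α)}(x)`. Under the
same substitution the numerator of the type I polynomial with `α` and `β` exchanged becomes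
`-(-1)^{n+m}` times the type II numerator, and the extra sign is that between the denominators
`α + n - m` and `m - n - α`.
-/

theorem jacP_neg (n : ℕ) (α β x : ℝ) :
    jacP n α β (-x) = (-1 : ℝ) ^ n * jacP n β α x := by
  have left_factor : (-x - 1) / 2 = -1 * ((x + 1) / 2) := by ring
  have right_factor : (-x + 1) / 2 = -1 * ((x - 1) / 2) := by ring
  have parameter_swap : (n : ℝ) + α + β + 1 = n + β + α + 1 := by ring
  rw [jacP, jacP, ← Finset.sum_flip, parameter_swap, mul_left_comm]
  congr 1
  rw [Finset.mul_sum]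
  refine Finset.sum_congr rfl fun s hs ↦ ?_
  have hsn : s ≤ n := Nat.le_of_lt_succ (Finset.mem_range.mp hs)
  have sign_split : (-1 : ℝ) ^ n = (-1) ^ (n - s) * (-1) ^ s := by
    rw [← pow_add, Nat.sub_add_cancel hsn]
  rw [Nat.sub_sub_self hsn, left_factor, right_factor, mul_pow, mul_pow, sign_split]
  ring

-- The factor `n` absorbs the case `n = 0`, where the truncated `n - 1` has the wrong parity.
theorem natCast_mul_jacP_sub_one_neg (n : ℕ) (α β x : ℝ) :
    n * jacP (n - 1) α β (-x) = -((-1 : ℝ) ^ n * (n * jacP (n - 1) β α x)) := by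
  cases n with
  | zero => simp only [Nat.cast_zero, zero_mul, mul_zero, neg_zero]
  | succ k =>
    rw [Nat.add_sub_cancel, jacP_neg, pow_succ]
    ring

theorem jacI_numerator_neg (m n : ℕ) (α β x : ℝ) :
    jacP m α (-β) (-x) * (n * (1 + -x) * jacP (n - 1) (α + 1) (β + 1) (-x)
        + β * jacP n α β (-x))
      - m * (1 + -x) * jacP (m - 1) (α + 1) (-β + 1) (-x) * jacP n α β (-x)
    = -((-1 : ℝ) ^ (n + m) *
      (jacP m (-β) α x * (n * (1 - x) * jacP (n - 1) (β + 1) (α + 1) x - β * jacP n β α x)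
        - m * (1 - x) * jacP (m - 1) (-β + 1) (α + 1) x * jacP n β α x)) := by
  calc
    _ = jacP m α (-β) (-x) * ((1 - x) * (n * jacP (n - 1) (α + 1) (β + 1) (-x))
            + β * jacP n α β (-x))
          - (1 - x) * (m * jacP (m - 1) (α + 1) (-β + 1) (-x)) * jacP n α β (-x) := by ring
    _ = _ := by
      rw [natCast_mul_jacP_sub_one_neg, natCast_mul_jacP_sub_one_neg, jacP_neg, jacP_neg, pow_add]
      ring

theorem stmt9 (m n : ℕ) (α β : ℝ) (h : (m : ℝ) - (n : ℝ) - α ≠ 0)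
    (h1 : poch ((m : ℝ) + -α + β + 1) m ≠ 0)
    (h2 : poch (((n - 1 : ℕ) : ℝ) + (α + 1) + (β + 1) + 1) (n - 1) ≠ 0)
    (h3 : poch ((n : ℝ) + α + β + 1) n ≠ 0)
    (h4 : poch (((m - 1 : ℕ) : ℝ) + (-α + 1) + (β + 1) + 1) (m - 1) ≠ 0) (x : ℝ) :
    jacII m n α β x = (-1 : ℝ) ^ (n + m) * jacI m n β α (-x) := by
  have denominator_neg : α + (n : ℝ) - m = -((m : ℝ) - n - α) := by ring
  have sign_sq : (-1 : ℝ) ^ (n + m) * (-1) ^ (n + m) = 1 := by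
    rw [← pow_add, Even.neg_one_pow ⟨n + m, rfl⟩]
  rw [jacII, jacI, jacI_numerator_neg, denominator_neg, one_div_neg_eq_neg_one_div, neg_mul_neg,
    mul_left_comm, ← mul_assoc ((-1 : ℝ) ^ (n + m)), sign_sq, one_mul]
end

section
/- Let m ≥ 1 be an integer and α, β ∈ ℝ be such that the monic Jacobi polynomials P_m^{(−α−1,β−1)}, P_{m−1}^{(−α,β)} and P_m^{(−α−2,β)} are defined. Then for every x ∈ ℝ, (α+1) P_m^{(−α−1,β−1)}(x) + m(1−x) P_{m−1}^{(−α,β)}(x) = (α+1−m) P_m^{(−α−2,β)}(x). -/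
open Finset Filter Topology

/-!
Writing `P` for `P_m^{(a,b)}`, the identity to prove is
`a P + (x - 1) P' = (a + m) P_m^{(a-1,b+1)}` at `a = -α - 1`, `b = β - 1`, since
`P' = m P_{m-1}^{(a+1,b+1)}`. All three polynomials are the same kind of binomial sum in
`u = (x - 1) / 2` and `v = (x + 1) / 2`, so the coefficients of `u ^ i * v ^ j` can be compared.
With `A = a + m` and `B = b + m`, absorption `A * C(A - 1, j) = (A - j) * C(A, j)` makes `C(A, j)` a
common factor, and what is left follows from Pascal's rule for `C(B + 1, i)` and
`i * C(B, i) = (B - i + 1) * C(B, i - 1)`.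
-/

section BinomialRing

variable {R : Type*} [CommRing R] [BinomialRing R]

theorem add_one_mul_ringChoose_add_one (r : R) (k : ℕ) :
    ((k : R) + 1) * Ring.choose r (k + 1) = r * Ring.choose (r - 1) k := by
  have h := Ring.choose_smul_choose r (Nat.le_add_left 1 k)
  rwa [Nat.choose_one_right, Nat.add_sub_cancel, Ring.choose_one_right, Nat.cast_one,
    nsmul_eq_mul, Nat.cast_add_one] at h

theorem add_one_mul_ringChoose_add_one' (r : R) (k : ℕ) :
    ((k : R) + 1) * Ring.choose r (k + 1) = (r - k) * Ring.choose r k := by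
  have h := Ring.choose_smul_choose r (Nat.le_add_right k 1)
  rwa [Nat.choose_succ_self_right, Nat.add_sub_cancel_left, Ring.choose_one_right, nsmul_eq_mul,
    Nat.cast_add_one, mul_comm (Ring.choose r k)] at h

theorem mul_ringChoose_sub_one (r : R) (k : ℕ) :
    r * Ring.choose (r - 1) k = (r - k) * Ring.choose r k := by
  rw [← add_one_mul_ringChoose_add_one, add_one_mul_ringChoose_add_one']

theorem mul_ringChoose_add_mul_ringChoose (a r : R) (k : ℕ) :
    a * Ring.choose r (k + 1) + (a + r + 1) * Ring.choose r k =
      (a + k + 1) * Ring.choose (r + 1) (k + 1) := by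
  rw [Ring.choose_succ_succ]
  linear_combination -add_one_mul_ringChoose_add_one' r k

/-- The homogeneous form of degree `n` in `u`, `v` underlying the Jacobi polynomial with parameters
`a`, `b`: its value at `u = (x - 1) / 2`, `v = (x + 1) / 2` is the Jacobi polynomial in its
standard, not monic, normalization. The sum runs over pairs `(i, j)` with `i + j = n`, so that no
truncated subtraction `n - i` occurs. -/
def jacobiForm (n : ℕ) (a b u v : R) : R :=
  ∑ p ∈ antidiagonal n, Ring.choose (a + n) p.2 * Ring.choose (b + n) p.1 * u ^ p.1 * v ^ p.2

theorem mul_jacobiForm_add_mul_jacobiForm (n : ℕ) (a b u v : R) :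
    a * jacobiForm (n + 1) a b u v
        + (n + 1 + a + b + 1) * u * jacobiForm n (a + 1) (b + 1) u v
      = (a + (n + 1)) * jacobiForm (n + 1) (a - 1) (b + 1) u v := by
  have hA_lower : a + 1 + n = a + (n + 1) := by ring
  have hA_shift : a - 1 + (n + 1) = a + (n + 1) - 1 := by ring
  have hB_lower : b + 1 + n = b + (n + 1) := by ring
  have hB_shift : b + 1 + (n + 1) = b + (n + 1) + 1 := by ring
  simp only [jacobiForm, Finset.Nat.sum_antidiagonal_succ, Nat.cast_add_one, hA_lower,
    hA_shift, hB_lower, hB_shift]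
  rw [mul_add, mul_add, add_assoc, mul_sum, mul_sum, mul_sum, ← sum_add_distrib]
  congr 1
  · have absorb := mul_ringChoose_sub_one (a + (n + 1)) (n + 1)
    rw [Nat.cast_add_one] at absorb
    simp only [Ring.choose_zero_right]
    linear_combination -(u ^ 0 * v ^ (n + 1)) * absorb
  · refine sum_congr rfl fun ⟨i, j⟩ hij => ?_
    have hn : (n : R) = i + j := by rw [← mem_antidiagonal.1 hij, Nat.cast_add]
    have absorb := mul_ringChoose_sub_one (a + (n + 1)) j
    have pascal := mul_ringChoose_add_mul_ringChoose a (b + (n + 1)) i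
    rw [show a + (n + 1) - j = a + i + 1 by rw [hn]; ring] at absorb
    linear_combination u ^ (i + 1) * v ^ j * (Ring.choose (a + (n + 1)) j * pascal
      - Ring.choose (b + (n + 1) + 1) (i + 1) * absorb)

end BinomialRing

theorem prod_Icc_div_factorial_eq_ringChoose_s10 {K : Type*} [Field K] [CharZero K] (a : K) (s k : ℕ) :
    (∏ j ∈ Icc (s + 1) (s + k), (a + (j : K))) / (k.factorial : K) =
      Ring.choose (a + (s + k : ℕ)) k := by
  induction k with
  | zero => simp
  | succ k ih =>
    have hk : (k : K) + 1 ≠ 0 := k.cast_add_one_ne_zero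
    have absorb := add_one_mul_ringChoose_add_one (a + (s + (k + 1) : ℕ)) k
    rw [show a + (s + (k + 1) : ℕ) - 1 = a + (s + k : ℕ) by push_cast; ring, ← ih] at absorb
    rw [← mul_right_inj' hk, absorb, ← add_assoc, prod_Icc_succ_top (by lia), Nat.factorial_succ,
      Nat.cast_mul, Nat.cast_add_one k]
    field_simp

theorem jacP_eq_mul_jacobiForm (n : ℕ) (a b x : ℝ) :
    jacP n a b x = 2 ^ n * (n.factorial : ℝ) / poch (n + a + b + 1) n *
      jacobiForm n a b ((x - 1) / 2) ((x + 1) / 2) := by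
  unfold jacP jacobiForm
  rw [Finset.Nat.sum_antidiagonal_eq_sum_range_succ_mk]
  congr 1
  refine sum_congr rfl fun s hs => ?_
  obtain ⟨k, rfl⟩ := Nat.exists_eq_add_of_le (mem_range_succ_iff.1 hs)
  have h := prod_Icc_div_factorial_eq_ringChoose_s10 b k s
  rw [add_comm k s] at h
  rw [Nat.add_sub_cancel_left, prod_Icc_div_factorial_eq_ringChoose_s10, h]

theorem poch_succ (a : ℝ) (n : ℕ) : poch a (n + 1) = a * poch (a + 1) n := by
  unfold poch
  rw [prod_range_succ', mul_comm, Nat.cast_zero, add_zero]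
  simp only [Nat.cast_add_one, add_assoc, add_comm (1 : ℝ)]

theorem mul_jacP_add_mul_jacP (n : ℕ) (a b x : ℝ)
    (h : poch (n + 1 + a + b + 1) (n + 1) ≠ 0) :
    a * jacP (n + 1) a b x + (n + 1) * (x - 1) * jacP n (a + 1) (b + 1) x
      = (a + (n + 1)) * jacP (n + 1) (a - 1) (b + 1) x := by
  have h_lower : (n : ℝ) + (a + 1) + (b + 1) + 1 = n + 1 + a + b + 1 + 1 := by ring
  have h_shift : (n : ℝ) + 1 + (a - 1) + (b + 1) + 1 = n + 1 + a + b + 1 := by ring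
  have key := mul_jacobiForm_add_mul_jacobiForm n a b ((x - 1) / 2) ((x + 1) / 2)
  rw [poch_succ] at h
  obtain ⟨hc, hp⟩ := mul_ne_zero_iff.1 h
  rw [jacP_eq_mul_jacobiForm, jacP_eq_mul_jacobiForm, jacP_eq_mul_jacobiForm, Nat.factorial_succ,
    Nat.cast_mul, Nat.cast_add_one, h_lower, h_shift, poch_succ, pow_succ]
  generalize (n : ℝ) + 1 + a + b + 1 = c at *
  field_simp
  linear_combination 2 * key

theorem stmt10 (m : ℕ) (hm : 1 ≤ m) (α β : ℝ)
    (h1 : poch ((m : ℝ) + (-α - 1) + (β - 1) + 1) m ≠ 0)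
    (h2 : poch (((m - 1 : ℕ) : ℝ) + -α + β + 1) (m - 1) ≠ 0)
    (h3 : poch ((m : ℝ) + (-α - 2) + β + 1) m ≠ 0) (x : ℝ) :
    (α + 1) * jacP m (-α - 1) (β - 1) x + (m : ℝ) * (1 - x) * jacP (m - 1) (-α) β x
      = (α + 1 - (m : ℝ)) * jacP m (-α - 2) β x := by
  obtain ⟨n, rfl⟩ := Nat.exists_eq_add_of_le' hm
  rw [Nat.cast_add_one] at h1
  have h := mul_jacP_add_mul_jacP n (-α - 1) (β - 1) x h1
  rw [sub_add_cancel, sub_add_cancel, show -α - 1 - 1 = -α - 2 by ring] at h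
  rw [Nat.add_sub_cancel, Nat.cast_add_one]
  linear_combination -h
end
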